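/- For every tuple w̄ of words and every n-tuple z̄ of words, |MCAT_C(w̄, z̄) \ MCAT_C(w̄)| ≤ 2n, i.e. appending n further words to a tuple enlarges its maximal common ancestor tree over C by at most 2n elements. -/

import Mathlib

/-!
Write `a ⊓ b` for the longest common prefix. Since the prefixes of a word form a chain, `⊓` is
ultrametric: among the three longest common prefixes of three words, two coincide and are prefixes
of the third. Hence an iterated longest common prefix is attained by two of the words, and the
maximal common ancestor tree of a tuple with set of entries `S` is `{ε} ∪ {a ⊓ b : a, b ∈ S}`.

Adding one word `z` to `S` creates at most two new nodes. One is `z` itself; the others have the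
form `z ⊓ a` with `a ∈ S`. If `z ⊓ a ≠ z ⊓ b`, then the shorter of the two equals `a ⊓ b` and is
therefore old, so all new nodes of this form coincide.
-/

namespace CLTL

/-- A word is a finite sequence of rationals. -/
abbrev Word := List ℚ

/-- Lexicographic order on lists over a linear order: `w ⊑ v` iff `w` is a prefix of `v`,
or they branch at some position with the letter of `w` smaller. -/
def lexLe {α : Type*} [LinearOrder α] (w v : List α) : Prop :=
  w <+: v ∨ ∃ (p : List α) (a b : α), a < b ∧ (p ++ [a]) <+: w ∧ (p ++ [b]) <+: v

/-- Longest common prefix of two lists. -/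
def lcp {α : Type*} [DecidableEq α] : List α → List α → List α
  | a :: w, b :: v => if a = b then a :: lcp w v else []
  | _, _ => []

/-- Iterated longest common prefix of a nonempty list of words. -/
def listLCP : List Word → Word
  | [] => []
  | [x] => x
  | x :: xs => lcp x (listLCP xs)

/-- Insertion of an `m`-gap at `u`. -/
def iota (u : Word) (m : ℕ) (w : Word) : Word :=
  if u <+: w then u ++ List.replicate m 0 ++ w.drop u.length else w

/-- The maximal common ancestor tree of a tuple `w` together with constants `C`:
`{ε}` together with all iterated longest common prefixes of nonempty subsets of entries. -/
def MCAT (C : List Word) {k : ℕ} (w : Fin k → Word) : Set Word :=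
  insert [] { x | ∃ I : Finset (Fin (k + C.length)),
    I.Nonempty ∧ x = listLCP (I.toList.map (Fin.append w C.get)) }

/-- `h` is the induced isomorphism witnessing `typ_C(w) = typ_C(v)`. -/
def IsInducedIso (C : List Word) {k : ℕ} (w v : Fin k → Word) (h : Word → Word) : Prop :=
  Set.BijOn h (MCAT C w) (MCAT C v) ∧
  (∀ x ∈ MCAT C w, ∀ y ∈ MCAT C w,
    (x <+: y ↔ h x <+: h y) ∧ (lexLe x y ↔ lexLe (h x) (h y))) ∧
  (∀ c ∈ C, h c = c) ∧
  (∀ i : Fin k, h (w i) = v i)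

/-- `typ_C(w) = typ_C(v)`. -/
def SameTyp (C : List Word) {k : ℕ} (w v : Fin k → Word) : Prop :=
  ∃ h : Word → Word, IsInducedIso C w v h

/-- The stretching condition on an isomorphism `h` of `MCAT_C(w)`:
`|h e| - |h d| ≥ |e| - |d|` whenever `d` is a proper prefix of `e`. -/
def StretchCond (C : List Word) {k : ℕ} (w : Fin k → Word) (h : Word → Word) : Prop :=
  ∀ d ∈ MCAT C w, ∀ e ∈ MCAT C w, d <+: e → d ≠ e →
    e.length + (h d).length ≤ (h e).length + d.length

/-- `w ≼* v` for tuples of words. -/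
def Stretch (C : List Word) {k : ℕ} (w v : Fin k → Word) : Prop :=
  ∃ h : Word → Word, IsInducedIso C w v h ∧ StretchCond C w h

/-- `≼*` on configurations. -/
def ConfigLe (C : List Word) {Q : Type*} {n : ℕ}
    (c d : Q × (Fin n → Word)) : Prop :=
  c.1 = d.1 ∧ Stretch C c.2 d.2

/-- A transition relation is type-invariant. -/
def TypeInvariant (C : List Word) {Q : Type*} {n : ℕ}
    (step : (Q × (Fin n → Word)) → (Q × (Fin n → Word)) → Prop) : Prop :=
  ∀ (q p : Q) (w v w' v' : Fin n → Word),
    step (q, w) (p, v) → SameTyp C (Fin.append w v) (Fin.append w' v') →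
      step (q, w') (p, v')

/-- Finite runs, indexed by `Fin (N+1)`. -/
def IsFinRun {Q : Type*} {n : ℕ}
    (step : (Q × (Fin n → Word)) → (Q × (Fin n → Word)) → Prop)
    {N : ℕ} (r : Fin (N + 1) → Q × (Fin n → Word)) : Prop :=
  ∀ i : Fin N, step (r i.castSucc) (r i.succ)

/-- Infinite runs. -/
def IsInfRun {Q : Type*} {n : ℕ}
    (step : (Q × (Fin n → Word)) → (Q × (Fin n → Word)) → Prop)
    (r : ℕ → Q × (Fin n → Word)) : Prop :=
  ∀ i : ℕ, step (r i) (r (i + 1))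

/-- The pair `(w, v)` (of tuples of equal type) is contracting. -/
def ContractingPair (C : List Word) {k : ℕ} (w v : Fin k → Word) : Prop :=
  ∃ h : Word → Word, IsInducedIso C w v h ∧
    ((∃ d ∈ MCAT C w, h d <+: d ∧ h d ≠ d) ∨
     (∃ d ∈ MCAT C w, ∃ e ∈ MCAT C w,
        d <+: e ∧ d ≠ e ∧ h e = e ∧ d <+: h d ∧ d ≠ h d))

/-- A set of words `T` has `n`-gaps above `B`. -/
def HasGaps (n : ℕ) (T B : Set Word) : Prop :=
  ∀ d ∈ T, ∀ e ∈ T, d <+: e → d ≠ e → (∀ b ∈ B, ¬ e <+: b) → n + d.length < e.length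

section Lists

variable {α : Type*}

lemma eq_of_forall_prefix_iff {a b : List α} (h : ∀ p, p <+: a ↔ p <+: b) : a = b :=
  antisymm ((h a).1 List.prefix_rfl) ((h b).2 List.prefix_rfl)

variable [DecidableEq α]

lemma prefix_lcp_iff {p a b : List α} : p <+: lcp a b ↔ p <+: a ∧ p <+: b := by
  induction a generalizing b p with
  | nil => simp +contextual [lcp]
  | cons x a ih =>
    rcases b with _ | ⟨y, b⟩
    · simp +contextual [lcp]
    rcases p with _ | ⟨q, p⟩
    · simp
    by_cases hxy : x = y
    · subst hxy
      simp only [lcp, if_true, List.cons_prefix_cons, ih]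
      exact and_and_left
    · simp only [lcp, if_neg hxy, List.prefix_nil, List.cons_prefix_cons]
      grind

lemma lcp_prefix_left (a b : List α) : lcp a b <+: a :=
  (prefix_lcp_iff.1 List.prefix_rfl).1

lemma lcp_prefix_right (a b : List α) : lcp a b <+: b :=
  (prefix_lcp_iff.1 List.prefix_rfl).2

lemma lcp_self (a : List α) : lcp a a = a :=
  eq_of_forall_prefix_iff fun p ↦ by rw [prefix_lcp_iff, and_self]

lemma lcp_comm (a b : List α) : lcp a b = lcp b a :=
  eq_of_forall_prefix_iff fun p ↦ by rw [prefix_lcp_iff, prefix_lcp_iff, and_comm]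

lemma lcp_nil (a : List α) : lcp a [] = [] :=
  List.prefix_nil.1 (lcp_prefix_right a [])

lemma lcp_lcp_eq_or_eq (x a b : List α) :
    lcp x (lcp a b) = lcp x a ∨ lcp x (lcp a b) = lcp a b := by
  rcases List.prefix_or_prefix_of_prefix (lcp_prefix_right x a) (lcp_prefix_left a b) with h | h
  · left
    exact antisymm
      (prefix_lcp_iff.2 ⟨lcp_prefix_left _ _, (lcp_prefix_right _ _).trans (lcp_prefix_left a b)⟩)
      (prefix_lcp_iff.2 ⟨lcp_prefix_left x a, h⟩)
  · right
    exact antisymm (lcp_prefix_right _ _)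
      (prefix_lcp_iff.2 ⟨h.trans (lcp_prefix_left x a), List.prefix_rfl⟩)

lemma lcp_eq_or_eq_of_lcp_prefix_lcp {z a b : List α} (h : lcp z a <+: lcp z b) :
    lcp z a = lcp z b ∨ lcp z a = lcp a b := by
  have hab : lcp z a <+: lcp a b :=
    prefix_lcp_iff.2 ⟨lcp_prefix_right z a, h.trans (lcp_prefix_right z b)⟩
  rcases List.prefix_or_prefix_of_prefix (lcp_prefix_right z b) (lcp_prefix_right a b)
    with hzb | hzb
  · left
    exact antisymm h
      (prefix_lcp_iff.2 ⟨lcp_prefix_left z b, hzb.trans (lcp_prefix_left a b)⟩)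
  · right
    exact antisymm hab
      (prefix_lcp_iff.2 ⟨hzb.trans (lcp_prefix_left z b), lcp_prefix_left a b⟩)

lemma lcp_ultrametric (z a b : List α) :
    lcp z a = lcp z b ∨ lcp z a = lcp a b ∨ lcp z b = lcp a b := by
  rcases List.prefix_or_prefix_of_prefix (lcp_prefix_left z a) (lcp_prefix_left z b) with h | h
  · exact (lcp_eq_or_eq_of_lcp_prefix_lcp h).imp_right Or.inl
  · rw [lcp_comm a b]
    exact (lcp_eq_or_eq_of_lcp_prefix_lcp h).imp Eq.symm Or.inr

/-- The maximal common ancestor tree of a set of words. Longest common prefixes of pairs suffice,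
because longer iterations are attained by a pair; the members of `S` arise as `lcp a a`. -/
def ancestorTree (S : Set (List α)) : Set (List α) :=
  insert [] (Set.image2 lcp S S)

lemma subset_ancestorTree (S : Set (List α)) : S ⊆ ancestorTree S :=
  fun a ha ↦ Or.inr ⟨a, ha, a, ha, lcp_self a⟩

lemma lcp_mem_ancestorTree {S : Set (List α)} {x t : List α} (hx : x ∈ S)
    (ht : t ∈ ancestorTree S) : lcp x t ∈ ancestorTree S := by
  rcases ht with rfl | ⟨a, ha, b, hb, rfl⟩
  · exact Or.inl (lcp_nil x)
  · rcases lcp_lcp_eq_or_eq x a b with h | h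
    · exact Or.inr ⟨x, hx, a, ha, h.symm⟩
    · exact Or.inr ⟨a, ha, b, hb, h.symm⟩

lemma ancestorTree_insert (z : List α) (S : Set (List α)) :
    ancestorTree (insert z S) = insert z (lcp z '' S ∪ ancestorTree S) := by
  have hcomm : (fun a ↦ lcp a z) '' S = lcp z '' S :=
    Set.image_congr fun a _ ↦ lcp_comm a z
  simp only [ancestorTree, Set.image2_insert_left, Set.image2_insert_right, Set.image_insert_eq,
    lcp_self, hcomm]
  grind

lemma subsingleton_image_lcp_sdiff_ancestorTree (z : List α) (S : Set (List α)) :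
    (lcp z '' S \ ancestorTree S).Subsingleton := by
  rintro _ ⟨⟨a, ha, rfl⟩, hza⟩ _ ⟨⟨b, hb, rfl⟩, hzb⟩
  have hab : lcp a b ∈ ancestorTree S := Or.inr ⟨a, ha, b, hb, rfl⟩
  rcases lcp_ultrametric z a b with h | h | h
  · exact h
  · exact absurd (h ▸ hab) hza
  · exact absurd (h ▸ hab) hzb

lemma encard_ancestorTree_insert_sdiff_le (z : List α) (S : Set (List α)) :
    (ancestorTree (insert z S) \ ancestorTree S).encard ≤ 2 := by
  have hsub : ancestorTree (insert z S) \ ancestorTree S ⊆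
      insert z (lcp z '' S \ ancestorTree S) := by
    rw [ancestorTree_insert]
    grind
  calc (ancestorTree (insert z S) \ ancestorTree S).encard
      ≤ (insert z (lcp z '' S \ ancestorTree S)).encard := Set.encard_le_encard hsub
    _ ≤ (lcp z '' S \ ancestorTree S).encard + 1 := Set.encard_insert_le _ _
    _ ≤ 1 + 1 := by
      gcongr
      exact Set.encard_le_one_iff_subsingleton.2 (subsingleton_image_lcp_sdiff_ancestorTree z S)
    _ = 2 := one_add_one_eq_two

lemma encard_ancestorTree_union_sdiff_le (S T : Set (List α)) :
    (ancestorTree (S ∪ T) \ ancestorTree S).encard ≤ 2 * T.encard := by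
  rcases T.finite_or_infinite with hT | hT
  · induction T, hT using Set.Finite.induction_on with
    | empty => simp
    | @insert z T hz _ ih =>
      rw [Set.union_insert, Set.encard_insert_of_notMem hz]
      calc (ancestorTree (insert z (S ∪ T)) \ ancestorTree S).encard
          ≤ ((ancestorTree (insert z (S ∪ T)) \ ancestorTree (S ∪ T)) ∪
              (ancestorTree (S ∪ T) \ ancestorTree S)).encard :=
            Set.encard_le_encard (sdiff_triangle _ _ _)
        _ ≤ (ancestorTree (insert z (S ∪ T)) \ ancestorTree (S ∪ T)).encard +
              (ancestorTree (S ∪ T) \ ancestorTree S).encard := Set.encard_union_le _ _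
        _ ≤ 2 + 2 * T.encard := add_le_add (encard_ancestorTree_insert_sdiff_le z _) ih
        _ = 2 * (T.encard + 1) := by ring
  · simp [hT.encard_eq]

end Lists

lemma range_fin_append {α : Type*} {m n : ℕ} (f : Fin m → α) (g : Fin n → α) :
    Set.range (Fin.append f g) = Set.range f ∪ Set.range g := by
  rw [← Set.Sum.elim_range, ← Fin.append_comp_sumElim, ← finSumFinEquiv.surjective.range_comp]
  rfl

lemma encard_range_fin_le {α : Type*} {n : ℕ} (f : Fin n → α) : (Set.range f).encard ≤ n := by
  simpa [Set.image_univ] using Set.encard_image_le f Set.univ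

lemma prefix_listLCP_iff {p : Word} {l : List Word} (hl : l ≠ []) :
    p <+: listLCP l ↔ ∀ x ∈ l, p <+: x := by
  fun_induction listLCP l with
  | case1 => contradiction
  | case2 x => simp
  | case3 x xs hxs ih => simp [prefix_lcp_iff, ih hxs]

lemma listLCP_mem_ancestorTree {S : Set Word} {l : List Word} (hl : ∀ x ∈ l, x ∈ S) :
    listLCP l ∈ ancestorTree S := by
  fun_induction listLCP l with
  | case1 => exact Set.mem_insert _ _
  | case2 x => exact subset_ancestorTree S (hl x (List.mem_singleton_self x))
  | case3 x xs _ ih =>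
    rw [List.forall_mem_cons] at hl
    exact lcp_mem_ancestorTree hl.1 (ih hl.2)

lemma listLCP_map_toList_pair {ι : Type*} [DecidableEq ι] (f : ι → Word) (i j : ι) :
    listLCP (({i, j} : Finset ι).toList.map f) = lcp (f i) (f j) :=
  -- Comparing prefixes avoids the unspecified order of `Finset.toList` and the case `i = j`.
  eq_of_forall_prefix_iff fun p ↦ by
    simp [prefix_listLCP_iff, prefix_lcp_iff, or_imp, forall_and]

lemma MCAT_eq_ancestorTree (C : List Word) {k : ℕ} (w : Fin k → Word) :
    MCAT C w = ancestorTree (Set.range w ∪ Set.range C.get) := by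
  rw [← range_fin_append]
  apply Set.Subset.antisymm
  · rintro x (rfl | ⟨I, -, rfl⟩)
    · exact Set.mem_insert _ _
    · exact listLCP_mem_ancestorTree (by simp)
  · rintro x (rfl | ⟨_, ⟨i, rfl⟩, _, ⟨j, rfl⟩, rfl⟩)
    · exact Set.mem_insert _ _
    · exact Or.inr ⟨{i, j}, by simp, (listLCP_map_toList_pair _ i j).symm⟩

theorem stmt15_general (C : List Word) {k n : ℕ} (w : Fin k → Word) (z : Fin n → Word) :
    (MCAT C (Fin.append w z) \ MCAT C w).Finite ∧
    (MCAT C (Fin.append w z) \ MCAT C w).ncard ≤ 2 * n := by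
  rw [← Set.encard_le_coe_iff_finite_ncard_le, MCAT_eq_ancestorTree, MCAT_eq_ancestorTree,
    range_fin_append, Set.union_right_comm]
  calc _ ≤ 2 * (Set.range z).encard := encard_ancestorTree_union_sdiff_le _ _
    _ ≤ 2 * n := by gcongr; exact encard_range_fin_le z
    _ = (2 * n : ℕ) := by push_cast; rfl

/-- Appending `n` further words to a tuple enlarges its maximal common ancestor tree over
`C` by at most `2n` elements. -/
theorem stmt15 (C : List Word) (hC : ∀ c ∈ C, ∀ c' : Word, c' <+: c → c' ∈ C)
    {k n : ℕ} (w : Fin k → Word) (z : Fin n → Word) :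
    (MCAT C (Fin.append w z) \ MCAT C w).Finite ∧
    (MCAT C (Fin.append w z) \ MCAT C w).ncard ≤ 2 * n :=
  stmt15_general C w z

end CLTL
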